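/- The position vector of M satisfies Δ^{II} x = −(1/(2K)) ∇^{III}(K, n) − 2n on U. -/

import Mathlib

open Matrix

noncomputable section

/-- The parameter domain `ℝ²`. -/
abbrev Param : Type := Fin 2 → ℝ

/-- Vectors in Euclidean 3-space. -/
abbrev Vec3 : Type := Fin 3 → ℝ

/-- Partial derivative of a vector-valued function in the `i`-th coordinate direction. -/
noncomputable def pd (i : Fin 2) (f : Param → Vec3) (u : Param) : Vec3 :=
  fderiv ℝ f u (Pi.single i 1)

/-- Partial derivative of a scalar function in the `i`-th coordinate direction. -/
noncomputable def pds (i : Fin 2) (f : Param → ℝ) (u : Param) : ℝ :=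
  fderiv ℝ f u (Pi.single i 1)

/-- The Euclidean inner product on `ℝ³`. -/
def dot3 (a b : Vec3) : ℝ := ∑ k, a k * b k

/-- The Euclidean norm on `ℝ³`. -/
noncomputable def norm3 (a : Vec3) : ℝ := Real.sqrt (dot3 a a)

/-- The Gauss map `n = (x_{/1} × x_{/2}) / ‖x_{/1} × x_{/2}‖`. -/
noncomputable def gaussMap (x : Param → Vec3) (u : Param) : Vec3 :=
  (norm3 (crossProduct (pd 0 x u) (pd 1 x u)))⁻¹ • crossProduct (pd 0 x u) (pd 1 x u)

/-- Components `g_{ij}` of the first fundamental form. -/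
noncomputable def fformI (x : Param → Vec3) (u : Param) : Matrix (Fin 2) (Fin 2) ℝ :=
  Matrix.of fun i j => dot3 (pd i x u) (pd j x u)

/-- Components `b_{ij} = ⟨∂²x/∂u^i∂u^j, n⟩` of the second fundamental form. -/
noncomputable def fformII (x : Param → Vec3) (u : Param) : Matrix (Fin 2) (Fin 2) ℝ :=
  Matrix.of fun i j => dot3 (pd i (pd j x) u) (gaussMap x u)

/-- Components `e_{ij} = ⟨n_{/i}, n_{/j}⟩` of the third fundamental form. -/
noncomputable def fformIII (x : Param → Vec3) (u : Param) : Matrix (Fin 2) (Fin 2) ℝ :=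
  Matrix.of fun i j => dot3 (pd i (gaussMap x) u) (pd j (gaussMap x) u)

/-- The Gauss curvature `K = det(b_{ij}) / det(g_{ij})`. -/
noncomputable def gaussCurv (x : Param → Vec3) (u : Param) : ℝ :=
  (fformII x u).det / (fformI x u).det

/-- The mean curvature `H = (1/2) g^{ij} b_{ij}`. -/
noncomputable def meanCurv (x : Param → Vec3) (u : Param) : ℝ :=
  (1 / 2) * ∑ i, ∑ j, (fformI x u)⁻¹ i j * fformII x u i j

/-- First Beltrami operator `∇^J(φ, ψ) = a^{ij} φ_{/i} ψ_{/j}` with respect to the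
fundamental form with component matrix `a`, for scalar `φ` and `ℝ³`-valued `ψ`. -/
noncomputable def beltrami1 (a : Param → Matrix (Fin 2) (Fin 2) ℝ)
    (φ : Param → ℝ) (ψ : Param → Vec3) (u : Param) : Vec3 :=
  ∑ i, ∑ j, ((a u)⁻¹ i j * pds i φ u) • pd j ψ u

/-- Second Beltrami operator
`Δ^J f = −(1/√|det a|) ∂_i (√|det a| a^{ij} ∂_j f)` with respect to the fundamental
form with component matrix `a`, acting componentwise on `ℝ³`-valued functions. -/
noncomputable def beltrami2 (a : Param → Matrix (Fin 2) (Fin 2) ℝ)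
    (f : Param → Vec3) (u : Param) : Vec3 :=
  -((Real.sqrt |(a u).det|)⁻¹ •
    ∑ i, ∑ j, pd i (fun v => (Real.sqrt |(a v).det| * (a v)⁻¹ i j) • pd j f v) u)

/-- `x` is an immersion on `U`: the partial derivatives are linearly independent. -/
def Immersed (x : Param → Vec3) (U : Set Param) : Prop :=
  ∀ u ∈ U, LinearIndependent ℝ ![pd 0 x u, pd 1 x u]

/-- `f` is nonconstant on `U`. -/
def NonconstOn (f : Param → Vec3) (U : Set Param) : Prop :=
  ¬ ∃ v : Vec3, ∀ u ∈ U, f u = v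

/-!
Write `F^i = √|det b| b^{ij} x_{/j}`, so that `√|det b| Δ^{II} x = -∂_i F^i`. It suffices to compare
inner products with the frame `n, n_{/1}, n_{/2}`, and by the product rule
`√|det b| ⟨w, Δ^{II} x⟩ = ⟨F^i, w_{/i}⟩ - ∂_i ⟨F^i, w⟩` for every vector field `w`. The Weingarten
equations give `⟨F^i, n⟩ = 0` and `⟨F^i, n_{/k}⟩ = -√|det b| δ^i_k`, hence `⟨n, Δ^{II} x⟩ = -2`.
They also give `F^i = -√|det b| e^{ij} n_{/j}`; since `n_{/k/i} = n_{/i/k}`, the sum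
`⟨F^i, n_{/k/i}⟩` is `-√|det b| ∂_k (det e) / (2 det e)` by the Jacobi formula for the derivative
of a determinant. As `det e = K det b`, this yields
`⟨n_{/k}, Δ^{II} x⟩ = ∂_k (det b) / (2 det b) - ∂_k (det e) / (2 det e) = -∂_k K / (2 K)`.
-/

open Filter Topology

section FrameLinearAlgebra

variable {𝕜 ι κ : Type*} [Field 𝕜] [Fintype ι] [DecidableEq ι] [Fintype κ]
  {A : Matrix ι κ 𝕜} {n : κ → 𝕜}

theorem det_gram_fromRows_replicateRow (hAn : A *ᵥ n = 0) :
    (fromRows A (replicateRow Unit n) * (fromRows A (replicateRow Unit n))ᵀ).det =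
      (A * Aᵀ).det * n ⬝ᵥ n := by
  have inner_normal : A * (replicateRow Unit n)ᵀ = 0 := by
    rw [transpose_replicateRow, ← replicateCol_mulVec, hAn, replicateCol_zero]
  rw [transpose_fromRows, fromRows_mul_fromCols, inner_normal, det_fromBlocks_zero₁₂,
    det_unique (replicateRow Unit n * _), transpose_replicateRow,
    replicateRow_mul_replicateCol_apply]

theorem eq_of_mulVec_eq_of_dotProduct_eq (hcard : Fintype.card κ = Fintype.card ι + 1)
    (hA : (A * Aᵀ).det ≠ 0) (hn : n ⬝ᵥ n ≠ 0) (hAn : A *ᵥ n = 0) {v w : κ → 𝕜}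
    (hvw : A *ᵥ v = A *ᵥ w) (hnvw : n ⬝ᵥ v = n ⬝ᵥ w) : v = w := by
  classical
  set M := fromRows A (replicateRow Unit n) with hM
  have gram_unit : IsUnit (M * Mᵀ).det := by
    rw [det_gram_fromRows_replicateRow hAn]
    exact isUnit_iff_ne_zero.2 (mul_ne_zero hA hn)
  have left_inv : Mᵀ * (M * Mᵀ)⁻¹ * M = 1 := by
    refine (mul_eq_one_comm_of_card_eq _ _ _ (by simp [hcard])).1 ?_
    rw [← Matrix.mul_assoc, mul_nonsing_inv _ gram_unit]
  have mulVec_eq : M *ᵥ v = M *ᵥ w := by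
    rw [hM, fromRows_mulVec, fromRows_mulVec, replicateRow_mulVec_eq_const,
      replicateRow_mulVec_eq_const, hvw, hnvw]
  rw [← one_mulVec v, ← one_mulVec w, ← left_inv, ← mulVec_mulVec, mulVec_eq, mulVec_mulVec]

theorem eq_mul_gram_inv_mul_of_mulVec_eq_zero {m : Type*} {B : Matrix m κ 𝕜}
    (hcard : Fintype.card κ = Fintype.card ι + 1) (hA : (A * Aᵀ).det ≠ 0) (hn : n ⬝ᵥ n ≠ 0)
    (hAn : A *ᵥ n = 0) (hBn : B *ᵥ n = 0) : B = B * Aᵀ * (A * Aᵀ)⁻¹ * A := by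
  have inner_rows : B * Aᵀ * (A * Aᵀ)⁻¹ * A * Aᵀ = B * Aᵀ := by
    rw [Matrix.mul_assoc _ A, nonsing_inv_mul_cancel_right _ _ (isUnit_iff_ne_zero.2 hA)]
  have inner_normal : (B * Aᵀ * (A * Aᵀ)⁻¹ * A) *ᵥ n = 0 := by
    rw [← mulVec_mulVec, hAn, mulVec_zero]
  funext i
  refine eq_of_mulVec_eq_of_dotProduct_eq hcard hA hn hAn ?_ ?_
  · funext j
    rw [mulVec, mulVec, dotProduct_comm, dotProduct_comm (A j)]
    exact (congrFun₂ inner_rows i j).symm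
  · rw [dotProduct_comm, dotProduct_comm n]
    exact (congrFun hBn i).trans (congrFun inner_normal i).symm

end FrameLinearAlgebra

section PartialDerivatives

variable {i k : Fin 2} {f g : Param → Vec3} {φ ψ : Param → ℝ} {u : Param}
  {m n : WithTop ℕ∞}

theorem pds_congr (h : φ =ᶠ[𝓝 u] ψ) : pds i φ u = pds i ψ u := by
  rw [pds, pds, h.fderiv_eq]

theorem pds_const (c : ℝ) : pds i (fun _ => c) u = 0 := by
  simp [pds]

theorem pds_mul (hφ : DifferentiableAt ℝ φ u) (hψ : DifferentiableAt ℝ ψ u) :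
    pds i (fun v => φ v * ψ v) u = φ u * pds i ψ u + ψ u * pds i φ u := by
  simp [pds, fderiv_fun_mul hφ hψ]

theorem pds_sub (hφ : DifferentiableAt ℝ φ u) (hψ : DifferentiableAt ℝ ψ u) :
    pds i (fun v => φ v - ψ v) u = pds i φ u - pds i ψ u := by
  simp [pds, fderiv_fun_sub hφ hψ]

theorem pds_sqrt_abs (hφ : DifferentiableAt ℝ φ u) (h0 : φ u ≠ 0) :
    pds i (fun v => √|φ v|) u = √|φ u| * pds i φ u / (2 * φ u) := by
  have deriv_abs : HasFDerivAt (fun v => |φ v|) ((SignType.sign (φ u) : ℝ) • fderiv ℝ φ u) u :=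
    hφ.hasFDerivAt.abs h0
  have sqrt_ne_zero : √|φ u| ≠ 0 := (Real.sqrt_pos.2 (abs_pos.2 h0)).ne'
  have sqrt_mul_self : √|φ u| * √|φ u| = φ u * SignType.sign (φ u) := by
    rw [Real.mul_self_sqrt (abs_nonneg _), self_mul_sign]
  rw [pds, (deriv_abs.sqrt (abs_ne_zero.2 h0)).fderiv]
  simp only [_root_.smul_apply, smul_eq_mul, pds]
  field_simp
  rw [pow_two, sqrt_mul_self]
  ring

theorem contDiffAt_dotProduct (hf : ContDiffAt ℝ m f u) (hg : ContDiffAt ℝ m g u) :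
    ContDiffAt ℝ m (fun v => f v ⬝ᵥ g v) u :=
  ContDiffAt.sum fun j _ => (contDiffAt_pi.1 hf j).mul (contDiffAt_pi.1 hg j)

theorem contDiffAt_crossProduct (hf : ContDiffAt ℝ m f u) (hg : ContDiffAt ℝ m g u) :
    ContDiffAt ℝ m (fun v => f v ⨯₃ g v) u := by
  have hf := contDiffAt_pi.1 hf
  have hg := contDiffAt_pi.1 hg
  simp only [cross_apply]
  refine contDiffAt_pi.2 (Fin.forall_fin_succ.2 ⟨?_, Fin.forall_fin_two.2 ⟨?_, ?_⟩⟩)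
  exacts [((hf 1).mul (hg 2)).sub ((hf 2).mul (hg 1)), ((hf 2).mul (hg 0)).sub ((hf 0).mul (hg 2)),
    ((hf 0).mul (hg 1)).sub ((hf 1).mul (hg 0))]

theorem differentiableAt_dotProduct (hf : DifferentiableAt ℝ f u) (hg : DifferentiableAt ℝ g u) :
    DifferentiableAt ℝ (fun v => f v ⬝ᵥ g v) u :=
  DifferentiableAt.fun_sum fun j _ => (differentiableAt_pi.1 hf j).mul (differentiableAt_pi.1 hg j)

theorem pds_dotProduct (hf : DifferentiableAt ℝ f u) (hg : DifferentiableAt ℝ g u) :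
    pds i (fun v => f v ⬝ᵥ g v) u = pd i f u ⬝ᵥ g u + f u ⬝ᵥ pd i g u := by
  have hf' := differentiableAt_pi.1 hf
  have hg' := differentiableAt_pi.1 hg
  simp only [pds, pd, dotProduct]
  rw [fderiv_fun_sum fun j _ => (hf' j).fun_mul (hg' j), ← Finset.sum_add_distrib]
  simp only [_root_.sum_apply]
  refine Finset.sum_congr rfl fun j _ => ?_
  rw [fderiv_fun_mul (hf' j) (hg' j), fderiv_apply hf, fderiv_apply hg]
  simp only [_root_.add_apply, _root_.smul_apply, ContinuousLinearMap.comp_apply,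
    ContinuousLinearMap.proj_apply, smul_eq_mul]
  ring

theorem contDiffAt_pd (hf : ContDiffAt ℝ n f u) (hmn : m + 1 ≤ n) : ContDiffAt ℝ m (pd i f) u :=
  (hf.fderiv_right hmn).clm_apply contDiffAt_const

theorem pd_comm (hf : ContDiffAt ℝ 2 f u) : pd i (pd k f) u = pd k (pd i f) u := by
  have hd : DifferentiableAt ℝ (fderiv ℝ f) u :=
    (hf.fderiv_right (m := 1) one_add_one_eq_two.le).differentiableAt one_ne_zero
  have pd_pd (i k : Fin 2) :
      pd i (pd k f) u = fderiv ℝ (fderiv ℝ f) u (Pi.single i 1) (Pi.single k 1) := by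
    unfold pd
    simp [fderiv_clm_apply hd (differentiableAt_const _)]
  rw [pd_pd, pd_pd]
  exact hf.isSymmSndFDerivAt (by simp) _ _

end PartialDerivatives

section MatrixFields

variable {k : Fin 2} {u : Param} {a : Param → Matrix (Fin 2) (Fin 2) ℝ}

theorem differentiableAt_det (ha : ∀ i j, DifferentiableAt ℝ (fun v => a v i j) u) :
    DifferentiableAt ℝ (fun v => (a v).det) u := by
  simp only [det_fin_two]
  exact ((ha 0 0).mul (ha 1 1)).sub ((ha 0 1).mul (ha 1 0))

theorem differentiableAt_inv_apply (ha : ∀ i j, DifferentiableAt ℝ (fun v => a v i j) u)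
    (hdet : (a u).det ≠ 0) (i j : Fin 2) : DifferentiableAt ℝ (fun v => (a v)⁻¹ i j) u := by
  have adjugate : DifferentiableAt ℝ (fun v => (a v).adjugate i j) u := by
    simp only [adjugate_fin_two]
    fin_cases i <;> fin_cases j
    exacts [ha 1 1, (ha 0 1).neg, (ha 1 0).neg, ha 0 0]
  simp only [inv_def, Ring.inverse_eq_inv', Matrix.smul_apply, smul_eq_mul]
  exact ((differentiableAt_det ha).inv hdet).mul adjugate

theorem pds_det (ha : ∀ i j, DifferentiableAt ℝ (fun v => a v i j) u) (hdet : (a u).det ≠ 0) :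
    pds k (fun v => (a v).det) u =
      (a u).det * ∑ i, ∑ j, (a u)⁻¹ j i * pds k (fun v => a v i j) u := by
  have det_mul_inv (i j : Fin 2) : (a u).det * (a u)⁻¹ i j = (a u).adjugate i j := by
    rw [inv_def, Ring.inverse_eq_inv', Matrix.smul_apply, smul_eq_mul, mul_inv_cancel_left₀ hdet]
  simp only [Finset.mul_sum, ← mul_assoc, det_mul_inv]
  simp only [Fin.sum_univ_two, adjugate_fin_two, det_fin_two]
  rw [pds_sub ((ha 0 0).fun_mul (ha 1 1)) ((ha 0 1).fun_mul (ha 1 0)), pds_mul (ha 0 0) (ha 1 1),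
    pds_mul (ha 0 1) (ha 1 0)]
  simp only [of_apply, cons_val', cons_val_zero, cons_val_fin_one, cons_val_one, neg_mul]
  ring

end MatrixFields

section Jacobian

/-- The Jacobian matrix of `f : ℝ² → ℝ³`, transposed so that its rows are the partial derivatives
`f_{/i}`; then `jacobian f u * (jacobian f u)ᵀ` is the metric induced by `f`. -/
def jacobian (f : Param → Vec3) (u : Param) : Matrix (Fin 2) (Fin 3) ℝ :=
  of fun i => pd i f u

variable {f : Param → Vec3} {φ : Param → ℝ} {a : Param → Matrix (Fin 2) (Fin 2) ℝ}
  {k : Fin 2} {u : Param}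

theorem jacobian_mulVec_apply (w : Vec3) (i : Fin 2) : (jacobian f u *ᵥ w) i = pd i f u ⬝ᵥ w :=
  rfl

theorem mul_jacobian_apply (c : Matrix (Fin 2) (Fin 2) ℝ) (i : Fin 2) :
    (c * jacobian f u) i = ∑ j, c i j • pd j f u := by
  ext l
  simp [mul_apply, jacobian]

theorem pds_det_gram_jacobian (hf : ∀ i, DifferentiableAt ℝ (pd i f) u)
    (hdet : (jacobian f u * (jacobian f u)ᵀ).det ≠ 0) :
    pds k (fun v => (jacobian f v * (jacobian f v)ᵀ).det) u =
      2 * (jacobian f u * (jacobian f u)ᵀ).det *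
        ∑ i, ((jacobian f u * (jacobian f u)ᵀ)⁻¹ * jacobian f u) i ⬝ᵥ pd k (pd i f) u := by
  have gram_apply (v : Param) (i j : Fin 2) :
      (jacobian f v * (jacobian f v)ᵀ) i j = pd i f v ⬝ᵥ pd j f v := rfl
  have inv_isSymm : (jacobian f u * (jacobian f u)ᵀ)⁻¹.IsSymm := by
    rw [IsSymm, transpose_nonsing_inv, transpose_mul, transpose_transpose]
  rw [pds_det (fun i j => by
    simp only [gram_apply]
    exact differentiableAt_dotProduct (hf i) (hf j)) hdet]
  simp only [gram_apply, pds_dotProduct (hf _) (hf _), mul_jacobian_apply, add_dotProduct,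
    smul_dotProduct, smul_eq_mul, Fin.sum_univ_two, inv_isSymm.apply 0 1]
  simp only [dotProduct_comm (pd k (pd _ f) u)]
  ring

theorem beltrami1_eq_vecMul :
    beltrami1 a φ f u = (fun i => pds i φ u) ᵥ* ((a u)⁻¹ * jacobian f u) := by
  rw [vecMul_eq_sum]
  simp only [beltrami1, mul_jacobian_apply, Finset.smul_sum, smul_smul, mul_comm]

theorem jacobian_mulVec_beltrami1 (ha : a u = jacobian f u * (jacobian f u)ᵀ)
    (hdet : (a u).det ≠ 0) : jacobian f u *ᵥ beltrami1 a φ f u = fun i => pds i φ u := by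
  rw [beltrami1_eq_vecMul, ← vecMul_transpose, vecMul_vecMul, Matrix.mul_assoc, ← ha,
    nonsing_inv_mul _ (isUnit_iff_ne_zero.2 hdet), vecMul_one]

theorem dotProduct_beltrami1_eq_zero {w : Vec3} (hw : jacobian f u *ᵥ w = 0) :
    w ⬝ᵥ beltrami1 a φ f u = 0 := by
  rw [beltrami1_eq_vecMul, dotProduct_comm, ← dotProduct_mulVec, ← mulVec_mulVec, hw, mulVec_zero,
    dotProduct_zero]

/-- The vector fields `√|det a| a^{ij} f_{/j}`, as the rows of a matrix: up to the factor
`-1/√|det a|`, the second Beltrami operator `Δ^J f` is their divergence. -/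
def beltramiFlux (a : Param → Matrix (Fin 2) (Fin 2) ℝ) (f : Param → Vec3) (u : Param) :
    Matrix (Fin 2) (Fin 3) ℝ :=
  √|(a u).det| • ((a u)⁻¹ * jacobian f u)

theorem beltramiFlux_apply (v : Param) (i : Fin 2) :
    beltramiFlux a f v i = ∑ j, (√|(a v).det| * (a v)⁻¹ i j) • pd j f v := by
  change √|(a v).det| • ((a v)⁻¹ * jacobian f v) i = _
  simp only [mul_jacobian_apply, Finset.smul_sum, smul_smul]

theorem differentiableAt_sqrt_abs_det (ha : ∀ i j, DifferentiableAt ℝ (fun v => a v i j) u)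
    (hdet : (a u).det ≠ 0) : DifferentiableAt ℝ (fun v => √|(a v).det|) u :=
  ((differentiableAt_det ha).abs hdet).sqrt (abs_ne_zero.2 hdet)

theorem dotProduct_beltrami2 (ha : ∀ i j, DifferentiableAt ℝ (fun v => a v i j) u)
    (hdet : (a u).det ≠ 0) (hf : ∀ j, DifferentiableAt ℝ (pd j f) u) {w : Param → Vec3}
    (hw : DifferentiableAt ℝ w u) :
    w u ⬝ᵥ beltrami2 a f u = (√|(a u).det|)⁻¹ *
      ∑ i, (beltramiFlux a f u i ⬝ᵥ pd i w u -
        pds i (fun v => beltramiFlux a f v i ⬝ᵥ w v) u) := by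
  have term_diff (i j : Fin 2) :
      DifferentiableAt ℝ (fun v => (√|(a v).det| * (a v)⁻¹ i j) • pd j f v) u :=
    ((differentiableAt_sqrt_abs_det ha hdet).mul (differentiableAt_inv_apply ha hdet i j)).smul
      (hf j)
  have flux_diff (i : Fin 2) : DifferentiableAt ℝ (fun v => beltramiFlux a f v i) u := by
    simp only [beltramiFlux_apply]
    exact DifferentiableAt.fun_sum fun j _ => term_diff i j
  have pd_flux (i : Fin 2) : pd i (fun v => beltramiFlux a f v i) u =
      ∑ j, pd i (fun v => (√|(a v).det| * (a v)⁻¹ i j) • pd j f v) u := by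
    simp only [beltramiFlux_apply]
    rw [pd, fderiv_fun_sum fun j _ => term_diff i j, _root_.sum_apply]
    rfl
  rw [dotProduct_comm]
  simp only [beltrami2, ← pd_flux, pds_dotProduct (flux_diff _) hw, sub_add_cancel_right,
    Finset.sum_neg_distrib, neg_dotProduct, smul_dotProduct, sum_dotProduct, smul_eq_mul, mul_neg]

end Jacobian

section Surface

variable {x : Param → Vec3} {u : Param} {m n : WithTop ℕ∞}

theorem fformIII_eq_gram :
    fformIII x u = jacobian (gaussMap x) u * (jacobian (gaussMap x) u)ᵀ :=
  rfl

theorem dotProduct_crossProduct_self_pos {a b : Vec3} (hab : LinearIndependent ℝ ![a, b]) :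
    0 < (a ⨯₃ b) ⬝ᵥ (a ⨯₃ b) :=
  dotProduct_star_self_pos_iff.2 (crossProduct_ne_zero_iff_linearIndependent.2 hab)

theorem gaussMap_dotProduct_self (hind : LinearIndependent ℝ ![pd 0 x u, pd 1 x u]) :
    gaussMap x u ⬝ᵥ gaussMap x u = 1 := by
  set c := pd 0 x u ⨯₃ pd 1 x u with hc
  have dot_pos : 0 < c ⬝ᵥ c :=
    dotProduct_crossProduct_self_pos hind
  have norm_sq : norm3 c * norm3 c = c ⬝ᵥ c := Real.mul_self_sqrt dot_pos.le
  rw [gaussMap, ← hc, smul_dotProduct, dotProduct_smul, ← norm_sq]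
  have norm_ne_zero : norm3 c ≠ 0 := (Real.sqrt_pos.2 dot_pos).ne'
  simp only [smul_eq_mul]
  field_simp

theorem jacobian_mulVec_gaussMap : jacobian x u *ᵥ gaussMap x u = 0 := by
  rw [gaussMap, mulVec_smul]
  refine smul_eq_zero_of_right _ (funext (Fin.forall_fin_two.2 ⟨?_, ?_⟩))
  exacts [dot_self_cross _ _, dot_cross_self _ _]

theorem contDiffAt_gaussMap (hx : ContDiffAt ℝ n x u) (hmn : m + 1 ≤ n)
    (hind : LinearIndependent ℝ ![pd 0 x u, pd 1 x u]) : ContDiffAt ℝ m (gaussMap x) u := by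
  have cross_contDiff : ContDiffAt ℝ m (fun v => pd 0 x v ⨯₃ pd 1 x v) u :=
    contDiffAt_crossProduct (contDiffAt_pd hx hmn) (contDiffAt_pd hx hmn)
  have dot_pos : 0 < (pd 0 x u ⨯₃ pd 1 x u) ⬝ᵥ (pd 0 x u ⨯₃ pd 1 x u) :=
    dotProduct_crossProduct_self_pos hind
  exact (((contDiffAt_dotProduct cross_contDiff cross_contDiff).sqrt dot_pos.ne').inv
    (Real.sqrt_pos.2 dot_pos).ne').smul cross_contDiff

theorem eventually_linearIndependent_pd (hx : ContDiffAt ℝ 1 x u)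
    (hind : LinearIndependent ℝ ![pd 0 x u, pd 1 x u]) :
    ∀ᶠ v in 𝓝 u, LinearIndependent ℝ ![pd 0 x v, pd 1 x v] := by
  simp only [← crossProduct_ne_zero_iff_linearIndependent] at hind ⊢
  have pd_contDiff (i : Fin 2) : ContDiffAt ℝ 0 (pd i x) u := contDiffAt_pd hx (by simp)
  exact (contDiffAt_crossProduct (pd_contDiff 0) (pd_contDiff 1)).continuousAt.eventually_ne hind

theorem det_fformI_ne_zero (hind : LinearIndependent ℝ ![pd 0 x u, pd 1 x u]) :
    (fformI x u).det ≠ 0 := by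
  have lagrange : (fformI x u).det =
      (pd 0 x u ⨯₃ pd 1 x u) ⬝ᵥ (pd 0 x u ⨯₃ pd 1 x u) := by
    rw [cross_dot_cross, det_fin_two]
    rfl
  rw [lagrange]
  exact (dotProduct_crossProduct_self_pos hind).ne'

theorem jacobian_gaussMap_mulVec_gaussMap (hx : ContDiffAt ℝ 2 x u)
    (hind : LinearIndependent ℝ ![pd 0 x u, pd 1 x u]) :
    jacobian (gaussMap x) u *ᵥ gaussMap x u = 0 := by
  have hn : DifferentiableAt ℝ (gaussMap x) u :=
    (contDiffAt_gaussMap hx one_add_one_eq_two.le hind).differentiableAt one_ne_zero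
  have unit_near : (fun v => gaussMap x v ⬝ᵥ gaussMap x v) =ᶠ[𝓝 u] fun _ => 1 :=
    (eventually_linearIndependent_pd (hx.of_le one_le_two) hind).mono
      fun v hv => gaussMap_dotProduct_self hv
  funext i
  have leibniz := pds_dotProduct (i := i) hn hn
  rw [pds_congr unit_near, pds_const, dotProduct_comm (gaussMap x u)] at leibniz
  exact add_self_eq_zero.1 leibniz.symm

theorem fformII_eq_neg_jacobian_mul_transpose (hx : ContDiffAt ℝ 2 x u)
    (hind : LinearIndependent ℝ ![pd 0 x u, pd 1 x u]) :
    fformII x u = -(jacobian (gaussMap x) u * (jacobian x u)ᵀ) := by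
  have hn : DifferentiableAt ℝ (gaussMap x) u :=
    (contDiffAt_gaussMap hx one_add_one_eq_two.le hind).differentiableAt one_ne_zero
  ext i j
  have hxj : DifferentiableAt ℝ (pd j x) u :=
    (contDiffAt_pd hx one_add_one_eq_two.le).differentiableAt one_ne_zero
  have tangent_dot_normal : (fun v => pd j x v ⬝ᵥ gaussMap x v) = fun _ => 0 :=
    funext fun v => congrFun jacobian_mulVec_gaussMap j
  have leibniz := pds_dotProduct (i := i) hxj hn
  rw [tangent_dot_normal, pds_const, dotProduct_comm (pd j x u)] at leibniz
  exact eq_neg_of_add_eq_zero_left leibniz.symm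

theorem fformII_isSymm (hx : ContDiffAt ℝ 2 x u) : (fformII x u).IsSymm :=
  IsSymm.ext fun _ _ => congrArg (· ⬝ᵥ gaussMap x u) (pd_comm hx)

theorem jacobian_mul_transpose_jacobian_gaussMap (hx : ContDiffAt ℝ 2 x u)
    (hind : LinearIndependent ℝ ![pd 0 x u, pd 1 x u]) :
    jacobian x u * (jacobian (gaussMap x) u)ᵀ = -fformII x u := by
  rw [← fformII_isSymm hx, fformII_eq_neg_jacobian_mul_transpose hx hind, transpose_neg, neg_neg,
    transpose_mul, transpose_transpose]

theorem jacobian_gaussMap_eq_weingarten (hx : ContDiffAt ℝ 2 x u)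
    (hind : LinearIndependent ℝ ![pd 0 x u, pd 1 x u]) :
    jacobian (gaussMap x) u = -(fformII x u * (fformI x u)⁻¹ * jacobian x u) := by
  have normal_ne_zero := (gaussMap_dotProduct_self hind).trans_ne one_ne_zero
  rw [fformII_eq_neg_jacobian_mul_transpose hx hind, Matrix.neg_mul, Matrix.neg_mul, neg_neg]
  exact eq_mul_gram_inv_mul_of_mulVec_eq_zero rfl (det_fformI_ne_zero hind) normal_ne_zero
    jacobian_mulVec_gaussMap (jacobian_gaussMap_mulVec_gaussMap hx hind)

theorem fformIII_eq_fformII_mul (hx : ContDiffAt ℝ 2 x u)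
    (hind : LinearIndependent ℝ ![pd 0 x u, pd 1 x u]) :
    fformIII x u = fformII x u * (fformI x u)⁻¹ * fformII x u := by
  rw [fformIII_eq_gram]
  nth_rewrite 1 [jacobian_gaussMap_eq_weingarten hx hind]
  rw [Matrix.neg_mul, Matrix.mul_assoc, jacobian_mul_transpose_jacobian_gaussMap hx hind,
    Matrix.mul_neg, neg_neg]

theorem det_fformIII (hx : ContDiffAt ℝ 2 x u)
    (hind : LinearIndependent ℝ ![pd 0 x u, pd 1 x u]) :
    (fformIII x u).det = gaussCurv x u * (fformII x u).det := by
  rw [fformIII_eq_fformII_mul hx hind, det_mul, det_mul, det_nonsing_inv, Ring.inverse_eq_inv',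
    gaussCurv, div_eq_mul_inv]

theorem gaussCurv_ne_zero (hind : LinearIndependent ℝ ![pd 0 x u, pd 1 x u])
    (hdet : (fformII x u).det ≠ 0) : gaussCurv x u ≠ 0 :=
  div_ne_zero hdet (det_fformI_ne_zero hind)

theorem det_fformIII_ne_zero (hx : ContDiffAt ℝ 2 x u)
    (hind : LinearIndependent ℝ ![pd 0 x u, pd 1 x u]) (hdet : (fformII x u).det ≠ 0) :
    (fformIII x u).det ≠ 0 := by
  rw [det_fformIII hx hind]
  exact mul_ne_zero (gaussCurv_ne_zero hind hdet) hdet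

theorem fformII_inv_mul_jacobian (hx : ContDiffAt ℝ 2 x u)
    (hind : LinearIndependent ℝ ![pd 0 x u, pd 1 x u]) (hdet : (fformII x u).det ≠ 0) :
    (fformII x u)⁻¹ * jacobian x u = -((fformIII x u)⁻¹ * jacobian (gaussMap x) u) := by
  have normal_ne_zero := (gaussMap_dotProduct_self hind).trans_ne one_ne_zero
  have jacobian_eq := eq_mul_gram_inv_mul_of_mulVec_eq_zero rfl
    (det_fformIII_ne_zero hx hind hdet) normal_ne_zero
    (jacobian_gaussMap_mulVec_gaussMap hx hind) (jacobian_mulVec_gaussMap (x := x))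
  rw [jacobian_eq, jacobian_mul_transpose_jacobian_gaussMap hx hind, ← fformIII_eq_gram,
    Matrix.neg_mul, Matrix.neg_mul, Matrix.mul_neg, Matrix.mul_assoc,
    nonsing_inv_mul_cancel_left _ _ (isUnit_iff_ne_zero.2 hdet)]

theorem beltramiFlux_fformII_mulVec_gaussMap :
    beltramiFlux (fformII x) x u *ᵥ gaussMap x u = 0 := by
  rw [beltramiFlux, smul_mulVec, ← mulVec_mulVec, jacobian_mulVec_gaussMap, mulVec_zero, smul_zero]

theorem beltramiFlux_fformII_mul_transpose (hx : ContDiffAt ℝ 2 x u)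
    (hind : LinearIndependent ℝ ![pd 0 x u, pd 1 x u]) (hdet : (fformII x u).det ≠ 0) :
    beltramiFlux (fformII x) x u * (jacobian (gaussMap x) u)ᵀ = √|(fformII x u).det| • -1 := by
  rw [beltramiFlux, smul_mul, Matrix.mul_assoc, jacobian_mul_transpose_jacobian_gaussMap hx hind,
    Matrix.mul_neg, nonsing_inv_mul _ (isUnit_iff_ne_zero.2 hdet)]

theorem differentiableAt_fformI_apply (hx : ContDiffAt ℝ 2 x u) (i j : Fin 2) :
    DifferentiableAt ℝ (fun v => fformI x v i j) u :=
  differentiableAt_dotProduct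
    ((contDiffAt_pd hx one_add_one_eq_two.le).differentiableAt one_ne_zero)
    ((contDiffAt_pd hx one_add_one_eq_two.le).differentiableAt one_ne_zero)

theorem differentiableAt_fformII_apply (hx : ContDiffAt ℝ 3 x u)
    (hind : LinearIndependent ℝ ![pd 0 x u, pd 1 x u]) (i j : Fin 2) :
    DifferentiableAt ℝ (fun v => fformII x v i j) u := by
  have hpd : ContDiffAt ℝ 2 (pd j x) u := contDiffAt_pd hx two_add_one_eq_three.le
  exact differentiableAt_dotProduct
    ((contDiffAt_pd hpd one_add_one_eq_two.le).differentiableAt one_ne_zero)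
    ((contDiffAt_gaussMap hx two_add_one_eq_three.le hind).differentiableAt two_ne_zero)

theorem pds_det_fformIII (hx : ContDiffAt ℝ 3 x u)
    (hind : LinearIndependent ℝ ![pd 0 x u, pd 1 x u]) (k : Fin 2) :
    pds k (fun v => (fformIII x v).det) u =
      gaussCurv x u * pds k (fun v => (fformII x v).det) u +
        (fformII x u).det * pds k (gaussCurv x) u := by
  have hx2 : ContDiffAt ℝ 2 x u := hx.of_le (by norm_num)
  have det_near : (fun v => (fformIII x v).det) =ᶠ[𝓝 u]
      fun v => gaussCurv x v * (fformII x v).det := by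
    filter_upwards [hx2.eventually (by simp),
      eventually_linearIndependent_pd (hx.of_le (by norm_num)) hind] with v hxv hindv
    exact det_fformIII hxv hindv
  have det_II_diff := differentiableAt_det (differentiableAt_fformII_apply hx hind)
  have det_I_diff := differentiableAt_det (differentiableAt_fformI_apply hx2)
  have curv_diff : DifferentiableAt ℝ (gaussCurv x) u := by
    unfold gaussCurv
    simp only [div_eq_mul_inv]
    exact det_II_diff.fun_mul (det_I_diff.inv (det_fformI_ne_zero hind))
  rw [pds_congr det_near, pds_mul curv_diff det_II_diff]

theorem gaussMap_dotProduct_beltrami2 (hx : ContDiffAt ℝ 3 x u)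
    (hind : LinearIndependent ℝ ![pd 0 x u, pd 1 x u]) (hdet : (fformII x u).det ≠ 0) :
    gaussMap x u ⬝ᵥ beltrami2 (fformII x) x u = -2 := by
  have hx2 : ContDiffAt ℝ 2 x u := hx.of_le (by norm_num)
  have hn : DifferentiableAt ℝ (gaussMap x) u :=
    (contDiffAt_gaussMap hx two_add_one_eq_three.le hind).differentiableAt two_ne_zero
  have hpd (j : Fin 2) : DifferentiableAt ℝ (pd j x) u :=
    (contDiffAt_pd hx two_add_one_eq_three.le).differentiableAt two_ne_zero
  have sqrt_ne_zero : √|(fformII x u).det| ≠ 0 := (Real.sqrt_pos.2 (abs_pos.2 hdet)).ne'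
  have flux_dot_normal (i : Fin 2) :
      (fun v => beltramiFlux (fformII x) x v i ⬝ᵥ gaussMap x v) = fun _ => 0 :=
    funext fun v => congrFun beltramiFlux_fformII_mulVec_gaussMap i
  have flux_dot_pd (i : Fin 2) : beltramiFlux (fformII x) x u i ⬝ᵥ pd i (gaussMap x) u =
      -√|(fformII x u).det| := by
    refine (congrFun₂ (beltramiFlux_fformII_mul_transpose hx2 hind hdet) i i).trans ?_
    simp
  rw [dotProduct_beltrami2 (differentiableAt_fformII_apply hx hind) hdet hpd hn]
  simp only [flux_dot_normal, flux_dot_pd, pds_const, Fin.sum_univ_two]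
  field_simp
  norm_num

theorem sum_pds_beltramiFlux_dotProduct (hx : ContDiffAt ℝ 3 x u)
    (hind : LinearIndependent ℝ ![pd 0 x u, pd 1 x u]) (hdet : (fformII x u).det ≠ 0)
    (k : Fin 2) :
    ∑ i, pds i (fun v => beltramiFlux (fformII x) x v i ⬝ᵥ pd k (gaussMap x) v) u =
      -pds k (fun v => √|(fformII x v).det|) u := by
  have hb := differentiableAt_fformII_apply hx hind
  have flux_near (i : Fin 2) :
      (fun v => beltramiFlux (fformII x) x v i ⬝ᵥ pd k (gaussMap x) v) =ᶠ[𝓝 u]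
        fun v => √|(fformII x v).det| * (-1 : Matrix (Fin 2) (Fin 2) ℝ) i k := by
    filter_upwards [(hx.of_le (by norm_num) : ContDiffAt ℝ 2 x u).eventually (by simp),
      eventually_linearIndependent_pd (hx.of_le (by norm_num)) hind,
      (differentiableAt_det hb).continuousAt.eventually_ne hdet] with v hxv hindv hdetv
    exact congrFun₂ (beltramiFlux_fformII_mul_transpose hxv hindv hdetv) i k
  simp only [pds_congr (flux_near _), pds_const,
    pds_mul (differentiableAt_sqrt_abs_det hb hdet) (differentiableAt_const _)]
  simp [one_apply]

theorem sum_beltramiFlux_dotProduct_pd_pd (hx : ContDiffAt ℝ 3 x u)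
    (hind : LinearIndependent ℝ ![pd 0 x u, pd 1 x u]) (hdet : (fformII x u).det ≠ 0)
    (k : Fin 2) :
    ∑ i, beltramiFlux (fformII x) x u i ⬝ᵥ pd i (pd k (gaussMap x)) u =
      -(√|(fformII x u).det| * pds k (fun v => (fformIII x v).det) u /
        (2 * (fformIII x u).det)) := by
  have hx2 : ContDiffAt ℝ 2 x u := hx.of_le (by norm_num)
  have hn : ContDiffAt ℝ 2 (gaussMap x) u := contDiffAt_gaussMap hx two_add_one_eq_three.le hind
  have hpd (i : Fin 2) : DifferentiableAt ℝ (pd i (gaussMap x)) u :=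
    (contDiffAt_pd hn one_add_one_eq_two.le).differentiableAt one_ne_zero
  have det_ne_zero := det_fformIII_ne_zero hx2 hind hdet
  have flux_row (i : Fin 2) : beltramiFlux (fformII x) x u i =
      -(√|(fformII x u).det| • ((fformIII x u)⁻¹ * jacobian (gaussMap x) u) i) := by
    rw [beltramiFlux, fformII_inv_mul_jacobian hx2 hind hdet, smul_neg]
    rfl
  have jacobi := pds_det_gram_jacobian (k := k) hpd det_ne_zero
  simp only [← fformIII_eq_gram] at jacobi
  simp only [flux_row, pd_comm (k := k) hn, neg_dotProduct, smul_dotProduct, Finset.sum_neg_distrib,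
    smul_eq_mul, ← Finset.mul_sum, jacobi]
  field_simp

theorem pd_gaussMap_dotProduct_beltrami2 (hx : ContDiffAt ℝ 3 x u)
    (hind : LinearIndependent ℝ ![pd 0 x u, pd 1 x u]) (hdet : (fformII x u).det ≠ 0)
    (k : Fin 2) :
    pd k (gaussMap x) u ⬝ᵥ beltrami2 (fformII x) x u =
      -(pds k (gaussCurv x) u / (2 * gaussCurv x u)) := by
  have hb := differentiableAt_fformII_apply hx hind
  have hn : DifferentiableAt ℝ (pd k (gaussMap x)) u :=
    (contDiffAt_pd (contDiffAt_gaussMap hx two_add_one_eq_three.le hind)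
      one_add_one_eq_two.le).differentiableAt one_ne_zero
  have hpd (j : Fin 2) : DifferentiableAt ℝ (pd j x) u :=
    (contDiffAt_pd hx two_add_one_eq_three.le).differentiableAt two_ne_zero
  have sqrt_ne_zero : √|(fformII x u).det| ≠ 0 := (Real.sqrt_pos.2 (abs_pos.2 hdet)).ne'
  have curv_ne_zero := gaussCurv_ne_zero hind hdet
  rw [dotProduct_beltrami2 hb hdet hpd hn, Finset.sum_sub_distrib,
    sum_beltramiFlux_dotProduct_pd_pd hx hind hdet, sum_pds_beltramiFlux_dotProduct hx hind hdet,
    pds_sqrt_abs (differentiableAt_det hb) hdet, pds_det_fformIII hx hind,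
    det_fformIII (hx.of_le (by norm_num)) hind]
  field_simp
  ring

theorem stmt3_general (hx : ContDiffAt ℝ 3 x u)
    (hind : LinearIndependent ℝ ![pd 0 x u, pd 1 x u]) (hdet : (fformII x u).det ≠ 0) :
    beltrami2 (fformII x) x u =
      -((1 / (2 * gaussCurv x u)) • beltrami1 (fformIII x) (gaussCurv x) (gaussMap x) u)
        - (2 : ℝ) • gaussMap x u := by
  have hx2 : ContDiffAt ℝ 2 x u := hx.of_le (by norm_num)
  have normal_sq := gaussMap_dotProduct_self hind
  have pd_normal := jacobian_gaussMap_mulVec_gaussMap hx2 hind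
  have det_III_ne_zero := det_fformIII_ne_zero hx2 hind hdet
  refine eq_of_mulVec_eq_of_dotProduct_eq rfl det_III_ne_zero (normal_sq.trans_ne one_ne_zero)
    pd_normal ?tangential ?normal
  case tangential =>
    rw [mulVec_sub, mulVec_neg, mulVec_smul, mulVec_smul, pd_normal,
      jacobian_mulVec_beltrami1 fformIII_eq_gram det_III_ne_zero]
    funext k
    rw [jacobian_mulVec_apply, pd_gaussMap_dotProduct_beltrami2 hx hind hdet]
    simp only [Pi.sub_apply, Pi.neg_apply, Pi.smul_apply, Pi.zero_apply, smul_eq_mul]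
    ring
  case normal =>
    rw [gaussMap_dotProduct_beltrami2 hx hind hdet, dotProduct_sub, dotProduct_neg,
      dotProduct_smul, dotProduct_smul, dotProduct_beltrami1_eq_zero pd_normal, normal_sq]
    norm_num

end Surface

/-- `Δ^{II} x = −(1/(2K)) ∇^{III}(K, n) − 2n` on `U`. -/
theorem stmt3 (U : Set Param) (x : Param → Vec3)
    (hU : IsOpen U) (hUconn : IsConnected U)
    (hx : ContDiffOn ℝ (⊤ : ℕ∞) x U) (himm : Immersed x U)
    (hell : ∀ u ∈ U, (fformII x u).PosDef) :
    ∀ u ∈ U,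
      beltrami2 (fformII x) x u =
        -((1 / (2 * gaussCurv x u)) • beltrami1 (fformIII x) (gaussCurv x) (gaussMap x) u)
          - (2 : ℝ) • gaussMap x u := by
  intro u hu
  have hxu : ContDiffAt ℝ 3 x u := contDiffAt_infty.1 (hx.contDiffAt (hU.mem_nhds hu)) 3
  exact stmt3_general hxu (himm u hu) (hell u hu).det_pos.ne'
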